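/- arXiv:1701.00650 — 4 statements merged into one kernel-verified Lean document; each statement's English description precedes it below -/
import Mathlib

section
/- For every weakly-left-linear (WLL) deterministic conditional term rewriting system R over a signature F and all terms s, t ∈ T(F,V): if s →*_{U(R)} t, then s →*_R t. That is, the simultaneous unraveling U is sound for WLL DCTRSs. -/
set_option autoImplicit false

/-- First-order terms over a signature `F` and variables `V`. -/
inductive Term (F : Type) (V : Type) : Type where
  | var : V → Term F V
  | app : F → List (Term F V) → Term F V

namespace Term

variable {F V G W : Type}

/-- Application of a substitution. -/
def subst (σ : V → Term F W) : Term F V → Term F W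
  | .var x => σ x
  | .app f ts => .app f (ts.attach.map (fun ⟨t, _⟩ => subst σ t))

/-- Renaming of variables. -/
def rename (g : V → W) (t : Term F V) : Term F W := t.subst (fun x => .var (g x))

/-- Mapping of function symbols. -/
def mapF (g : F → G) : Term F V → Term G V
  | .var x => .var x
  | .app f ts => .app (g f) (ts.attach.map (fun ⟨t, _⟩ => mapF g t))

/-- Number of occurrences of the variable `x` in a term. -/
def count [DecidableEq V] (x : V) : Term F V → ℕ
  | .var y => if y = x then 1 else 0
  | .app _ ts => (ts.attach.map (fun ⟨t, _⟩ => count x t)).sum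

/-- The list of variables occurring in a term (with repetitions). -/
def varList : Term F V → List V
  | .var x => [x]
  | .app _ ts => ts.attach.flatMap (fun ⟨t, _⟩ => varList t)

/-- A term is linear if every variable occurs at most once in it. -/
def Linear [DecidableEq V] (t : Term F V) : Prop := ∀ x : V, t.count x ≤ 1

/-- Well-formedness of a term with respect to an arity assignment. -/
inductive WF (ar : F → ℕ) : Term F V → Prop where
  | var (x : V) : WF ar (.var x)
  | app (f : F) (ts : List (Term F V)) :
      ts.length = ar f → (∀ t ∈ ts, WF ar t) → WF ar (.app f ts)

end Term

/-- Number of occurrences of `x` in a sequence of terms. -/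
def seqCount {F V : Type} [DecidableEq V] (x : V) (ts : List (Term F V)) : ℕ :=
  (ts.map (Term.count x)).sum

/-- An oriented conditional rewrite rule `l → r ⇐ s1 ≈ t1, …, sk ≈ tk`. -/
structure CRule (F V : Type) : Type where
  lhs : Term F V
  rhs : Term F V
  conds : List (Term F V × Term F V)

/-- A conditional term rewriting system: a set of conditional rules. -/
abbrev CTRS (F V : Type) := Set (CRule F V)

namespace CRule

variable {F V W : Type}

/-- The sequence `l, t1, …, tk` of "pattern" terms of a rule. -/
def pats (ρ : CRule F V) : List (Term F V) := ρ.lhs :: ρ.conds.map Prod.snd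

/-- The sequence `r, s1, …, sk` of "source" terms of a rule. -/
def srcs (ρ : CRule F V) : List (Term F V) := ρ.rhs :: ρ.conds.map Prod.fst

/-- Weak left-linearity: `|l,t1,…,tk|_x = 1` for every `x ∈ Var(r,s1,…,sk)`. -/
def WLL [DecidableEq V] (ρ : CRule F V) : Prop :=
  ∀ x : V, 0 < seqCount x ρ.srcs → seqCount x ρ.pats = 1

/-- Determinism: `Var(si) ⊆ Var(l, t1, …, t_{i−1})`. -/
def Det [DecidableEq V] (ρ : CRule F V) : Prop :=
  ∀ i : ℕ, ∀ h : i < ρ.conds.length, ∀ x : V,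
    0 < Term.count x (ρ.conds.get ⟨i, h⟩).1 →
    0 < seqCount x (ρ.lhs :: (ρ.conds.take i).map Prod.snd)

/-- Type 3: `Var(r) ⊆ Var(l, s1, t1, …, sk, tk)`. -/
def Type3 [DecidableEq V] (ρ : CRule F V) : Prop :=
  ∀ x : V, 0 < Term.count x ρ.rhs →
    0 < seqCount x (ρ.lhs :: ρ.conds.flatMap (fun c => [c.1, c.2]))

/-- The left-hand side is a non-variable term. -/
def LhsNonVar (ρ : CRule F V) : Prop := ∀ x : V, ρ.lhs ≠ .var x

/-- Renaming the variables of a rule. -/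
def mapV (g : V → W) (ρ : CRule F V) : CRule F W :=
  ⟨ρ.lhs.rename g, ρ.rhs.rename g, ρ.conds.map (fun c => (c.1.rename g, c.2.rename g))⟩

end CRule

/-- `R` is a deterministic CTRS (of Type 3, left-hand sides non-variable). -/
def IsDCTRS {F V : Type} [DecidableEq V] (R : CTRS F V) : Prop :=
  ∀ ρ ∈ R, ρ.Det ∧ ρ.Type3 ∧ ρ.LhsNonVar

/-- All rules of `R` are weakly left-linear. -/
def IsWLL {F V : Type} [DecidableEq V] (R : CTRS F V) : Prop := ∀ ρ ∈ R, ρ.WLL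

/-- Closure of a relation under contexts (rewriting below the root). -/
inductive CtxStep {F V : Type} (root : Term F V → Term F V → Prop) :
    Term F V → Term F V → Prop where
  | root {s t : Term F V} : root s t → CtxStep root s t
  | congr {f : F} {pre post : List (Term F V)} {s t : Term F V} :
      CtxStep root s t →
      CtxStep root (.app f (pre ++ s :: post)) (.app f (pre ++ t :: post))

/-- A root rewrite step using a rule of `R`, conditions evaluated with `prev`. -/
def RootStep {F V : Type} (R : CTRS F V) (prev : Term F V → Term F V → Prop)
    (s t : Term F V) : Prop :=
  ∃ ρ ∈ R, ∃ σ : V → Term F V,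
    s = ρ.lhs.subst σ ∧ t = ρ.rhs.subst σ ∧
    ∀ c ∈ ρ.conds, Relation.ReflTransGen prev (c.1.subst σ) (c.2.subst σ)

/-- The level-stratified reduction relation `→_{(n),R}`. -/
def LevelStep {F V : Type} (R : CTRS F V) : ℕ → Term F V → Term F V → Prop
  | 0 => fun _ _ => False
  | n + 1 => CtxStep (RootStep R (LevelStep R n))

/-- The reduction relation `→_R = ⋃_{n} →_{(n),R}`. -/
def Red {F V : Type} (R : CTRS F V) (s t : Term F V) : Prop :=
  ∃ n : ℕ, LevelStep R n s t

/-- Many-step reduction `→*_R`. -/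
def RedStar {F V : Type} (R : CTRS F V) : Term F V → Term F V → Prop :=
  Relation.ReflTransGen (Red R)

/-- `n`-fold composition of a relation. -/
def NFold {α : Type} (r : α → α → Prop) : ℕ → α → α → Prop
  | 0 => fun a b => a = b
  | n + 1 => fun a c => ∃ b, r a b ∧ NFold r n b c

/-- One-hole contexts. -/
inductive Ctx (F V : Type) : Type where
  | hole : Ctx F V
  | app : F → List (Term F V) → Ctx F V → List (Term F V) → Ctx F V

/-- Filling the hole of a context with a term. -/
def Ctx.fill {F V : Type} : Ctx F V → Term F V → Term F V
  | .hole, t => t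
  | .app f pre C post, t => .app f (pre ++ C.fill t :: post)
/-- Signature extended with the fresh symbols `U^ρ_i`. -/
abbrev UF (F V : Type) := F ⊕ (CRule F V × ℕ)

/-- Embedding of terms over `F` into terms over the extended signature `U_R(F)`. -/
def liftF {F V : Type} (t : Term F V) : Term (UF F V) V := t.mapF Sum.inl

/-- The list `X⃗_i` enumerating `Var(l, t1, …, t_{i−1})` in a fixed order. -/
def Xlist {F V : Type} [DecidableEq V] (ρ : CRule F V) (i : ℕ) : List V :=
  (ρ.lhs.varList ++ ((ρ.conds.take (i - 1)).map Prod.snd).flatMap Term.varList).dedup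

/-- A dummy condition (used as a default, never relevant). -/
def dummyCond {F V : Type} (ρ : CRule F V) : Term F V × Term F V := (ρ.lhs, ρ.lhs)

/-- The term `U^ρ_i(t, X⃗_i)`. -/
def uterm {F V : Type} [DecidableEq V] (ρ : CRule F V) (i : ℕ) (t : Term F V) :
    Term (UF F V) V :=
  .app (Sum.inr (ρ, i)) (liftF t :: (Xlist ρ i).map Term.var)

/-- Left-hand side of the `j`-th unraveled rule of `ρ` (j = 0, …, k). -/
def ulhs {F V : Type} [DecidableEq V] (ρ : CRule F V) (j : ℕ) : Term (UF F V) V :=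
  if j = 0 then liftF ρ.lhs
  else uterm ρ j (ρ.conds.getD (j - 1) (dummyCond ρ)).2

/-- Right-hand side of the `j`-th unraveled rule of `ρ` (j = 0, …, k). -/
def urhs {F V : Type} [DecidableEq V] (ρ : CRule F V) (j : ℕ) : Term (UF F V) V :=
  if j = ρ.conds.length then liftF ρ.rhs
  else uterm ρ (j + 1) (ρ.conds.getD j (dummyCond ρ)).1

/-- The unconditional rules `U(ρ)` obtained by unraveling the rule `ρ`. -/
def URules {F V : Type} [DecidableEq V] (ρ : CRule F V) : Set (CRule (UF F V) V) :=
  { r | ∃ j ≤ ρ.conds.length, r = ⟨ulhs ρ j, urhs ρ j, []⟩ }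

/-- The simultaneous unraveling `U(R)` of a DCTRS `R`. -/
def USys {F V : Type} [DecidableEq V] (R : CTRS F V) : CTRS (UF F V) V :=
  ⋃ ρ ∈ R, URules ρ

/-- `R` is ultra-WLL (`U`-WLL): every rule of `U(R)` is WLL. -/
def IsUWLL {F V : Type} [DecidableEq V] (R : CTRS F V) : Prop :=
  ∀ r ∈ USys R, r.WLL

namespace WLLProof

theorem term_ind {F V : Type} {P : Term F V → Prop} (hv : ∀ x, P (.var x))
    (ha : ∀ f ts, (∀ t ∈ ts, P t) → P (.app f ts)) : ∀ t, P t
  | .var x => hv x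
  | .app f ts => ha f ts (fun t _ => term_ind hv ha t)

variable {F V : Type}

theorem subst_var {W : Type} (σ : V → Term F W) (x : V) : (Term.var x).subst σ = σ x := by
  simp [Term.subst]

theorem subst_app {W : Type} (σ : V → Term F W) (f : F) (ts : List (Term F V)) :
    (Term.app f ts).subst σ = .app f (ts.map (Term.subst σ)) := by
  simp [Term.subst]

theorem liftF_var (x : V) : liftF (F := F) (.var x) = .var x := by
  simp [liftF, Term.mapF]

theorem liftF_app (f : F) (ts : List (Term F V)) :
    liftF (.app f ts) = .app (Sum.inl f) (ts.map liftF) := by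
  simp only [liftF, Term.mapF]
  congr 1
  simp [liftF]

theorem mem_varList_app {f : F} {ts : List (Term F V)} {x : V} :
    x ∈ (Term.app f ts).varList ↔ ∃ t ∈ ts, x ∈ t.varList := by
  simp [Term.varList]

theorem mem_varList_var {x y : V} : x ∈ (Term.var (F := F) y).varList ↔ x = y := by
  simp [Term.varList]

theorem count_app [DecidableEq V] (x : V) (f : F) (ts : List (Term F V)) :
    Term.count x (.app f ts) = seqCount x ts := by
  simp [Term.count, seqCount]

theorem seqCount_nil [DecidableEq V] (x : V) : seqCount (F := F) x [] = 0 := rfl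

theorem seqCount_cons [DecidableEq V] (x : V) (t : Term F V) (ts : List (Term F V)) :
    seqCount x (t :: ts) = t.count x + seqCount x ts := by
  simp [seqCount]

theorem seqCount_append [DecidableEq V] (x : V) (ts us : List (Term F V)) :
    seqCount x (ts ++ us) = seqCount x ts + seqCount x us := by
  simp [seqCount]

theorem seqCount_pos [DecidableEq V] (x : V) (ts : List (Term F V)) :
    0 < seqCount x ts ↔ ∃ t ∈ ts, 0 < t.count x := by
  induction ts with
  | nil => simp [seqCount_nil]
  | cons t ts ih =>
    rw [seqCount_cons]
    simp only [List.mem_cons, exists_eq_or_imp, ← ih]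
    omega

theorem count_pos [DecidableEq V] (x : V) (t : Term F V) : 0 < t.count x ↔ x ∈ t.varList := by
  induction t using term_ind with
  | hv y => simp only [Term.count, Term.varList, List.mem_singleton]; split_ifs <;> grind
  | ha f ts ih =>
    rw [count_app, seqCount_pos, mem_varList_app]
    constructor
    · rintro ⟨t, ht, h⟩; exact ⟨t, ht, (ih t ht).1 h⟩
    · rintro ⟨t, ht, h⟩; exact ⟨t, ht, (ih t ht).2 h⟩

theorem subst_congr {W : Type} {σ τ : V → Term F W} (t : Term F V)
    (h : ∀ x ∈ t.varList, σ x = τ x) : t.subst σ = t.subst τ := by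
  induction t using term_ind with
  | hv y => simpa [subst_var] using h y (by simp [mem_varList_var])
  | ha f ts ih =>
    rw [subst_app, subst_app]
    congr 1
    apply List.map_congr_left
    intro t ht
    exact ih t ht (fun x hx => h x (mem_varList_app.2 ⟨t, ht, hx⟩))

theorem varList_liftF (t : Term F V) {x : V} : x ∈ (liftF t).varList ↔ x ∈ t.varList := by
  induction t using term_ind with
  | hv y => simp [liftF_var, mem_varList_var]
  | ha f ts ih =>
    rw [liftF_app, mem_varList_app, mem_varList_app]
    simp only [List.mem_map, exists_exists_and_eq_and]
    constructor
    · rintro ⟨t, ht, h⟩; exact ⟨t, ht, (ih t ht).1 h⟩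
    · rintro ⟨t, ht, h⟩; exact ⟨t, ht, (ih t ht).2 h⟩

/-! ### Rewriting facts -/

theorem rtg_mono {α : Type} {r r' : α → α → Prop} {a b : α} (hab : Relation.ReflTransGen r a b)
    (h : ∀ a b, r a b → r' a b) : Relation.ReflTransGen r' a b := by
  induction hab with
  | refl => exact .refl
  | tail _ h2 ih => exact ih.tail (h _ _ h2)

theorem ctx_mono {r r' : Term F V → Term F V → Prop} (h : ∀ a b, r a b → r' a b) {a b}
    (hab : CtxStep r a b) : CtxStep r' a b := by
  induction hab with
  | root h1 => exact .root (h _ _ h1)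
  | congr _ ih => exact .congr ih

theorem root_mono {R : CTRS F V} {r r' : Term F V → Term F V → Prop} (h : ∀ a b, r a b → r' a b)
    {a b} (hab : RootStep R r a b) : RootStep R r' a b := by
  obtain ⟨ρ, hρ, σ, h1, h2, h3⟩ := hab
  exact ⟨ρ, hρ, σ, h1, h2, fun c hc => rtg_mono (h3 c hc) h⟩

theorem level_succ {R : CTRS F V} (n : ℕ) : ∀ {a b}, LevelStep R n a b → LevelStep R (n+1) a b := by
  induction n with
  | zero => intro a b h; exact h.elim
  | succ n ih =>
    intro a b h
    exact ctx_mono (fun _ _ => root_mono (fun _ _ => ih)) h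

theorem level_mono {R : CTRS F V} {n m : ℕ} (hnm : n ≤ m) {a b} (h : LevelStep R n a b) :
    LevelStep R m a b := by
  induction hnm with
  | refl => exact h
  | step _ ih => exact level_succ _ ih

theorem star_level {R : CTRS F V} {a b} (h : RedStar R a b) :
    ∃ n, Relation.ReflTransGen (LevelStep R n) a b := by
  induction h with
  | refl => exact ⟨0, .refl⟩
  | tail _ h2 ih =>
    obtain ⟨n, hn⟩ := ih
    obtain ⟨m, hm⟩ := h2
    exact ⟨max n m, (rtg_mono hn (fun _ _ => level_mono (le_max_left _ _))).tail
      (level_mono (le_max_right _ _) hm)⟩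

theorem conds_level {R : CTRS F V} (σ : V → Term F V) (cs : List (Term F V × Term F V))
    (h : ∀ c ∈ cs, RedStar R (c.1.subst σ) (c.2.subst σ)) :
    ∃ n, ∀ c ∈ cs, Relation.ReflTransGen (LevelStep R n) (c.1.subst σ) (c.2.subst σ) := by
  induction cs with
  | nil => exact ⟨0, by simp⟩
  | cons c cs ih =>
    obtain ⟨n, hn⟩ := ih (fun c hc => h c (List.mem_cons_of_mem _ hc))
    obtain ⟨m, hm⟩ := star_level (h c List.mem_cons_self)
    refine ⟨max n m, ?_⟩
    intro d hd
    rcases List.mem_cons.1 hd with rfl | hd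
    · exact rtg_mono hm (fun _ _ => level_mono (le_max_right _ _))
    · exact rtg_mono (hn d hd) (fun _ _ => level_mono (le_max_left _ _))

theorem red_rule {R : CTRS F V} {ρ : CRule F V} (hρ : ρ ∈ R) (σ : V → Term F V)
    (h : ∀ c ∈ ρ.conds, RedStar R (c.1.subst σ) (c.2.subst σ)) :
    RedStar R (ρ.lhs.subst σ) (ρ.rhs.subst σ) := by
  obtain ⟨n, hn⟩ := conds_level σ _ h
  exact .single ⟨n+1, .root ⟨ρ, hρ, σ, rfl, rfl, hn⟩⟩

theorem star_ctx {R : CTRS F V} {f : F} {pre post : List (Term F V)} {a b}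
    (h : RedStar R a b) : RedStar R (.app f (pre ++ a :: post)) (.app f (pre ++ b :: post)) := by
  induction h with
  | refl => exact .refl
  | tail _ h2 ih =>
    obtain ⟨n, hn⟩ := h2
    refine ih.tail ?_
    cases n with
    | zero => exact hn.elim
    | succ n => exact ⟨n+1, .congr hn⟩

theorem star_args_aux {α : Type} {R : CTRS F V} {f : F} (g h : α → Term F V) (ps : List α)
    (H : ∀ p ∈ ps, RedStar R (g p) (h p)) : ∀ pre,
    RedStar R (.app f (pre ++ ps.map g)) (.app f (pre ++ ps.map h)) := by
  induction ps with
  | nil => intro pre; exact .refl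
  | cons p ps ih =>
    intro pre
    have h1 : RedStar R (.app f (pre ++ g p :: ps.map g)) (.app f (pre ++ h p :: ps.map g)) :=
      star_ctx (H p List.mem_cons_self)
    have h2 := ih (fun p hp => H p (List.mem_cons_of_mem _ hp)) (pre ++ [h p])
    simp only [List.append_assoc, List.singleton_append] at h2
    exact Relation.ReflTransGen.trans h1 h2

theorem star_args {α : Type} {R : CTRS F V} {f : F} (g h : α → Term F V) (ps : List α)
    (H : ∀ p ∈ ps, RedStar R (g p) (h p)) :
    RedStar R (.app f (ps.map g)) (.app f (ps.map h)) := by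
  simpa using star_args_aux g h ps H []

theorem star_subst {R : CTRS F V} {σ τ : V → Term F V} (t : Term F V)
    (h : ∀ x ∈ t.varList, RedStar R (σ x) (τ x)) : RedStar R (t.subst σ) (t.subst τ) := by
  induction t using term_ind with
  | hv y => simpa [subst_var] using h y (by simp [mem_varList_var])
  | ha f ts ih =>
    rw [subst_app, subst_app]
    exact star_args _ _ _ (fun t ht => ih t ht (fun x hx => h x (mem_varList_app.2 ⟨t, ht, hx⟩)))

/-! ### Back translation and simulation -/

variable [DecidableEq V]

/-- Back translation. -/
def tb : Term (UF F V) V → Term F V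
  | .var x => .var x
  | .app (Sum.inl f) ts => .app f (ts.attach.map (fun ⟨t, _⟩ => tb t))
  | .app (Sum.inr (ρ, i)) ts =>
      ρ.lhs.subst (fun x =>
        (ts.attach.map (fun ⟨t, _⟩ => tb t)).tail.getD ((Xlist ρ i).idxOf x) (.var x))

theorem tb_var (x : V) : tb (F := F) (.var x) = .var x := by simp [tb]

theorem tb_inl (f : F) (ts : List (Term (UF F V) V)) :
    tb (.app (Sum.inl f) ts) = .app f (ts.map tb) := by simp [tb]

theorem mem_Xlist {ρ : CRule F V} {j : ℕ} {x : V} : x ∈ Xlist ρ (j+1) ↔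
    x ∈ ρ.lhs.varList ∨ ∃ c ∈ ρ.conds.take j, x ∈ c.2.varList := by
  simp only [Xlist, List.mem_dedup, List.mem_append, List.mem_flatMap, List.mem_map,
    exists_exists_and_eq_and, Nat.add_sub_cancel]

theorem tb_inr (ρ : CRule F V) (j : ℕ) (u : Term (UF F V) V) (τ : V → Term (UF F V) V) :
    tb (.app (Sum.inr (ρ, j+1)) (u :: (Xlist ρ (j+1)).map τ)) =
      ρ.lhs.subst (fun x => tb (τ x)) := by
  rw [tb]
  apply subst_congr
  intro x hx
  have hx' : x ∈ Xlist ρ (j+1) := mem_Xlist.2 (.inl hx)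
  have := List.idxOf_lt_length_of_mem hx'
  simp [List.getD_eq_getElem?_getD, this]

theorem tb_lift_subst (t : Term F V) (τ : V → Term (UF F V) V) :
    tb ((liftF t).subst τ) = t.subst (fun x => tb (τ x)) := by
  induction t using term_ind with
  | hv y => simp [liftF_var, subst_var]
  | ha f ts ih =>
    rw [liftF_app, subst_app, subst_app, tb_inl]
    simp only [List.map_map]
    congr 1
    apply List.map_congr_left
    intro t ht
    exact ih t ht

theorem tb_lift (t : Term F V) : tb (liftF t) = t := by
  induction t using term_ind with
  | hv y => simp [liftF_var, tb_var]
  | ha f ts ih =>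
    rw [liftF_app, tb_inl]
    simp only [List.map_map]
    congr 1
    conv_rhs => rw [← List.map_id ts]
    apply List.map_congr_left
    intro t ht
    exact ih t ht

/-- Variables occurring exactly once in the patterns. -/
def Lin (ρ : CRule F V) (x : V) : Prop := seqCount x ρ.pats = 1

open Classical in
/-- History on `L`, current value elsewhere. -/
noncomputable def mix (L : V → Prop) (σ : V → Term F V) (τ : V → Term (UF F V) V) (x : V) :
    Term (UF F V) V := if L x then liftF (σ x) else τ x

/-- The simulation relation: `a` is an ancestor of `u`. -/
inductive Sim (R : CTRS F V) : Term F V → Term (UF F V) V → Prop where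
  | var {a x} : RedStar R a (.var x) → Sim R a (.var x)
  | app {a : Term F V} {f : F} {us : List (Term (UF F V) V)}
      (ps : List (Term F V × Term (UF F V) V)) :
      RedStar R a (.app f (ps.map Prod.fst)) → us = ps.map Prod.snd →
      (∀ p ∈ ps, Sim R p.1 p.2) → Sim R a (.app (Sum.inl f) us)
  | cond {a : Term F V} {ρ : CRule F V} {j i : ℕ} {c : Term F V × Term F V} {σ : V → Term F V}
      {τ : V → Term (UF F V) V} {u : Term (UF F V) V} {us : List (Term (UF F V) V)} :
      ρ ∈ R → ρ.conds[j]? = some c → i = j + 1 →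
      Sim R a ((liftF ρ.lhs).subst (mix (Lin ρ) σ τ)) →
      (∀ d ∈ ρ.conds.take j, Sim R (d.1.subst σ) ((liftF d.2).subst (mix (Lin ρ) σ τ))) →
      Sim R (c.1.subst σ) u →
      (∀ x ∈ Xlist ρ (j+1), Lin ρ x → Sim R (σ x) (τ x)) →
      us = u :: (Xlist ρ (j+1)).map τ →
      Sim R a (.app (Sum.inr (ρ, i)) us)

variable {R : CTRS F V}

theorem sim_tb {a u} (h : Sim R a u) : RedStar R a (tb u) := by
  induction h with
  | var h => simpa [tb_var] using h
  | app ps h1 h2 _ ih =>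
    subst h2
    rw [tb_inl, List.map_map]
    exact Relation.ReflTransGen.trans h1 (star_args _ _ _ ih)
  | @cond a ρ j i c σ τ u us hρ hc hi _ _ _ _ hus ih1 ih2 ih3 ih4 =>
    subst hi hus
    rw [tb_inr]
    rw [tb_lift_subst] at ih1
    refine Relation.ReflTransGen.trans ih1 (star_subst _ ?_)
    intro x hx
    by_cases hL : Lin ρ x
    · simpa [mix, hL, tb_lift] using ih4 x (mem_Xlist.2 (.inl hx)) hL
    · simp only [mix, hL, if_false]; exact .refl

theorem sim_pre {a b u} (hab : RedStar R a b) (h : Sim R b u) : Sim R a u := by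
  have tr := @Relation.ReflTransGen.trans _ (Red R)
  induction h with
  | var h => exact .var (tr hab h)
  | app ps h1 h2 h3 _ => exact .app ps (tr hab h1) h2 h3
  | cond h1 h2 h3 h4 h5 h6 h7 h8 ih1 _ _ _ =>
    exact .cond h1 h2 h3 (ih1 hab) h5 h6 h7 h8

theorem sim_subst {σ : V → Term F V} {τ : V → Term (UF F V) V} (t : Term F V)
    (h : ∀ x ∈ t.varList, Sim R (σ x) (τ x)) : Sim R (t.subst σ) ((liftF t).subst τ) := by
  induction t using term_ind with
  | hv y => simpa [subst_var, liftF_var] using h y (by simp [mem_varList_var])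
  | ha f ts ih =>
    rw [subst_app, liftF_app, subst_app]
    refine .app (ts.map fun t => (t.subst σ, (liftF t).subst τ)) ?_ ?_ ?_
    · simp only [List.map_map]; exact .refl
    · simp
    · intro p hp
      obtain ⟨t, ht, rfl⟩ := List.mem_map.1 hp
      exact ih t ht (fun x hx => h x (mem_varList_app.2 ⟨t, ht, hx⟩))

theorem sim_lift (t : Term F V) : Sim R t (liftF t) := by
  induction t using term_ind with
  | hv y => rw [liftF_var]; exact .var .refl
  | ha f ts ih =>
    rw [liftF_app]
    refine .app (ts.map fun t => (t, liftF t)) ?_ ?_ ?_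
    · simp only [List.map_map, Function.comp_def, List.map_id']; exact .refl
    · simp
    · intro p hp
      obtain ⟨t, ht, rfl⟩ := List.mem_map.1 hp
      exact ih t ht

theorem sim_congr_subst {a} {τ τ' : V → Term (UF F V) V} (t : Term F V)
    (h : ∀ x ∈ t.varList, τ x = τ' x) (hs : Sim R a ((liftF t).subst τ)) :
    Sim R a ((liftF t).subst τ') := by
  rwa [← subst_congr (liftF t) (fun x hx => h x ((varList_liftF t).1 hx))]

theorem decomp (L : V → Prop) (τ : V → Term (UF F V) V) (t : Term F V) : ∀ a,
    (∀ x, L x → t.count x ≤ 1) → Sim R a ((liftF t).subst τ) →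
    ∃ σ : V → Term F V, (∀ x ∈ t.varList, L x → Sim R (σ x) (τ x)) ∧
      Sim R a ((liftF t).subst (mix L σ τ)) := by
  induction t using term_ind with
  | hv y =>
    intro a _ h
    rw [liftF_var, subst_var] at h
    refine ⟨fun _ => a, ?_, ?_⟩
    · intro x hx _; rw [mem_varList_var.1 hx]; exact h
    · rw [liftF_var, subst_var]
      by_cases hL : L y
      · simp only [mix, hL, if_true]; exact sim_lift a
      · simpa only [mix, hL, if_false] using h
  | ha f ts ih =>
    intro a hcnt h
    have aux : ∀ (ts : List (Term F V)) (ps : List (Term F V × Term (UF F V) V)),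
        (∀ t ∈ ts, ∀ a, (∀ x, L x → t.count x ≤ 1) → Sim R a ((liftF t).subst τ) →
          ∃ σ : V → Term F V, (∀ x ∈ t.varList, L x → Sim R (σ x) (τ x)) ∧
          Sim R a ((liftF t).subst (mix L σ τ))) →
        (∀ x, L x → seqCount x ts ≤ 1) →
        (∀ p ∈ ps, Sim R p.1 p.2) →
        ts.map (fun t => (liftF t).subst τ) = ps.map Prod.snd →
        ∃ σ : V → Term F V, (∀ t ∈ ts, ∀ x ∈ t.varList, L x → Sim R (σ x) (τ x)) ∧
          ∃ qs : List (Term F V × Term (UF F V) V), qs.map Prod.fst = ps.map Prod.fst ∧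
            ts.map (fun t => (liftF t).subst (mix L σ τ)) = qs.map Prod.snd ∧
            ∀ p ∈ qs, Sim R p.1 p.2 := by
      intro ts
      induction ts with
      | nil =>
        intro ps _ _ _ he
        have : ps = [] := by simpa using he.symm
        subst this
        exact ⟨fun x => .var x, by simp, [], by simp, by simp, by simp⟩
      | cons t ts iht =>
        intro ps IH hc hps he
        cases ps with
        | nil => simp at he
        | cons p ps =>
          simp only [List.map_cons, List.cons.injEq] at he
          obtain ⟨he1, he2⟩ := he
          obtain ⟨σ2, hσ2, qs, hq1, hq2, hq3⟩ := iht ps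
            (fun t ht => IH t (List.mem_cons_of_mem _ ht))
            (fun x hx => by have := hc x hx; rw [seqCount_cons] at this; omega)
            (fun p hp => hps p (List.mem_cons_of_mem _ hp)) he2
          obtain ⟨σ1, hσ1, hs1⟩ := IH t List.mem_cons_self p.1
            (fun x hx => by have := hc x hx; rw [seqCount_cons] at this; omega)
            (by rw [he1]; exact hps p List.mem_cons_self)
          have hdisj : ∀ t' ∈ ts, ∀ x ∈ t'.varList, L x → x ∉ t.varList := by
            intro t' ht' x hx hL hxt
            have h1 := (count_pos x t).2 hxt
            have h2 := (seqCount_pos x ts).2 ⟨t', ht', (count_pos x t').2 hx⟩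
            have := hc x hL
            rw [seqCount_cons] at this
            omega
          have e1 : ∀ x ∈ t.varList, mix L σ1 τ x =
              mix L (fun x => if x ∈ t.varList then σ1 x else σ2 x) τ x := by
            intro x hx; simp [mix, hx]
          have e2 : ∀ t' ∈ ts, ∀ x ∈ t'.varList, mix L σ2 τ x =
              mix L (fun x => if x ∈ t.varList then σ1 x else σ2 x) τ x := by
            intro t' ht' x hx
            by_cases hL : L x
            · simp [mix, hL, hdisj t' ht' x hx hL]
            · simp [mix, hL]
          refine ⟨fun x => if x ∈ t.varList then σ1 x else σ2 x, ?_, 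
            (p.1, (liftF t).subst (mix L (fun x => if x ∈ t.varList then σ1 x else σ2 x) τ)) :: qs,
            ?_, ?_, ?_⟩
          · intro t' ht' x hx hL
            rcases List.mem_cons.1 ht' with rfl | ht'
            · simpa [hx] using hσ1 x hx hL
            · simpa [hdisj t' ht' x hx hL] using hσ2 t' ht' x hx hL
          · simp [hq1]
          · rw [List.map_cons, List.map_cons, ← hq2]
            congr 1
            apply List.map_congr_left
            intro t' ht'
            exact (subst_congr _ (fun x hx => e2 t' ht' x ((varList_liftF t').1 hx))).symm
          · intro q hq
            rcases List.mem_cons.1 hq with rfl | hq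
            · exact sim_congr_subst t e1 hs1
            · exact hq3 q hq
    rw [liftF_app, subst_app, List.map_map] at h
    cases h with
    | app ps h1 h2 h3 =>
      obtain ⟨σ, hσ, qs, hq1, hq2, hq3⟩ := aux ts ps ih
        (fun x hx => by simpa [count_app] using hcnt x hx) h3 h2
      refine ⟨σ, ?_, ?_⟩
      · intro x hx hL
        obtain ⟨t, ht, hx⟩ := mem_varList_app.1 hx
        exact hσ t ht x hx hL
      · rw [liftF_app, subst_app, List.map_map]
        exact .app qs (hq1 ▸ h1) hq2 hq3

/-- Everything known after `j` conditions have been processed. -/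
structure Inv (R : CTRS F V) (ρ : CRule F V) (j : ℕ) (σ : V → Term F V)
    (τ : V → Term (UF F V) V) (a : Term F V) : Prop where
  lhs : Sim R a ((liftF ρ.lhs).subst (mix (Lin ρ) σ τ))
  conds : ∀ d ∈ ρ.conds.take j, Sim R (d.1.subst σ) ((liftF d.2).subst (mix (Lin ρ) σ τ))
  vars : ∀ x ∈ Xlist ρ (j+1), Lin ρ x → Sim R (σ x) (τ x)

theorem lin_cond {ρ : CRule F V} (hw : ρ.WLL) {c} (hc : c ∈ ρ.conds) {x} (hx : x ∈ c.1.varList) :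
    Lin ρ x :=
  hw x ((seqCount_pos _ _).2 ⟨c.1, List.mem_cons_of_mem _ (List.mem_map_of_mem hc),
    (count_pos _ _).2 hx⟩)

theorem lin_rhs {ρ : CRule F V} (hw : ρ.WLL) {x} (hx : x ∈ ρ.rhs.varList) : Lin ρ x :=
  hw x ((seqCount_pos _ _).2 ⟨ρ.rhs, List.mem_cons_self, (count_pos _ _).2 hx⟩)

theorem advance {ρ : CRule F V} (hρ : ρ ∈ R) (hw : ρ.WLL) (hd : ρ.Det) {j : ℕ}
    (hj : j ≤ ρ.conds.length) {σ : V → Term F V} {τ : V → Term (UF F V) V} {a}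
    (h : Inv R ρ j σ τ a) : Sim R a ((urhs ρ j).subst τ) := by
  rcases hj.eq_or_lt with rfl | hj
  · rw [urhs, if_pos rfl]
    have hs : ∀ t : Term F V, (∀ x ∈ t.varList, Lin ρ x) →
        t.subst (fun x => tb (mix (Lin ρ) σ τ x)) = t.subst σ := by
      intro t ht
      apply subst_congr
      intro x hx
      simp [mix, ht x hx, tb_lift]
    have h1 := sim_tb h.lhs
    rw [tb_lift_subst] at h1
    have h2 := red_rule hρ (fun x => tb (mix (Lin ρ) σ τ x)) (by
      intro c hc
      have := sim_tb (h.conds c (by simpa using hc))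
      rw [tb_lift_subst] at this
      rwa [hs c.1 (fun x hx => lin_cond hw hc hx)])
    rw [hs ρ.rhs (fun x hx => lin_rhs hw hx)] at h2
    refine sim_pre (Relation.ReflTransGen.trans h1 h2) (sim_subst _ ?_)
    intro x hx
    have hL := lin_rhs hw hx
    refine h.vars x ?_ hL
    have hpos : 0 < seqCount x ρ.pats := by rw [hL]; exact one_pos
    obtain ⟨t, ht, htx⟩ := (seqCount_pos _ _).1 hpos
    rw [count_pos] at htx
    rcases List.mem_cons.1 ht with rfl | ht
    · exact mem_Xlist.2 (.inl htx)
    · obtain ⟨c, hc, rfl⟩ := List.mem_map.1 ht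
      exact mem_Xlist.2 (.inr ⟨c, by simpa using hc, htx⟩)
  · rw [urhs, if_neg hj.ne, uterm, subst_app]
    have hg : ρ.conds[j]? = some ρ.conds[j] := List.getElem?_eq_getElem hj
    refine .cond (σ := σ) (τ := τ) hρ hg rfl h.lhs h.conds (u := (liftF ρ.conds[j].1).subst τ)
      (sim_subst _ ?_) h.vars ?_
    · intro x hx
      refine h.vars x ?_ (lin_cond hw (List.getElem_mem hj) hx)
      have := hd j hj x ((count_pos _ _).2 (by simpa using hx))
      obtain ⟨t, ht, htx⟩ := (seqCount_pos _ _).1 this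
      rw [count_pos] at htx
      rcases List.mem_cons.1 ht with rfl | ht
      · exact mem_Xlist.2 (.inl htx)
      · obtain ⟨c, hc, rfl⟩ := List.mem_map.1 ht
        exact mem_Xlist.2 (.inr ⟨c, hc, htx⟩)
    · simp [List.getD_eq_getElem?_getD, hg, subst_var, Function.comp_def]

theorem sim_root (hD : IsDCTRS R) (hW : IsWLL R) {a : Term F V} {ρ : CRule F V} (hρ : ρ ∈ R) {j : ℕ}
    (hj : j ≤ ρ.conds.length) {τ : V → Term (UF F V) V} (h : Sim R a ((ulhs ρ j).subst τ)) :
    Sim R a ((urhs ρ j).subst τ) := by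
  obtain ⟨hd, -, -⟩ := hD ρ hρ
  have hw := hW ρ hρ
  cases j with
  | zero =>
    rw [ulhs, if_pos rfl] at h
    obtain ⟨σ, h1, h2⟩ := decomp (Lin ρ) τ ρ.lhs a (by
      intro x hx
      rw [Lin, CRule.pats, seqCount_cons] at hx
      omega) h
    refine advance hρ hw hd hj (σ := σ) ⟨h2, by simp, ?_⟩
    intro x hx hL
    rw [mem_Xlist] at hx
    simp at hx
    exact h1 x hx hL
  | succ j =>
    have hlt : j < ρ.conds.length := hj
    have hg : ρ.conds[j]? = some ρ.conds[j] := List.getElem?_eq_getElem hlt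
    rw [ulhs, if_neg (Nat.succ_ne_zero j), uterm, subst_app] at h
    generalize hus : List.map (Term.subst τ) _ = us at h
    cases h with
    | @cond _ _ j' _ c σ τ' u _ _ hc hi h1 h2 h3 h4 h5 =>
      obtain rfl : j = j' := by omega
      rw [hg] at hc
      obtain rfl := Option.some.inj hc
      rw [h5] at hus
      simp [List.getD_eq_getElem?_getD, hg, -List.map_inj_left] at hus
      obtain ⟨rfl, hus⟩ := hus
      have hτ : ∀ x ∈ Xlist ρ (j+1), τ x = τ' x := by
        intro x hx
        have := List.map_inj_left.1 hus x hx
        simpa [subst_var] using this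
      have htake : ρ.conds.take (j+1) = ρ.conds.take j ++ [ρ.conds[j]] := by
        rw [List.take_succ_eq_append_getElem hlt]
      have hcount : ∀ x, seqCount x ρ.pats = ρ.lhs.count x +
          (seqCount x ((ρ.conds.take j).map Prod.snd) + (ρ.conds[j].2.count x +
            seqCount x ((ρ.conds.drop (j+1)).map Prod.snd))) := by
        intro x
        have : ρ.conds = ρ.conds.take j ++ ρ.conds[j] :: ρ.conds.drop (j+1) := by simp
        rw [CRule.pats, seqCount_cons]
        conv_lhs => rw [this]
        rw [List.map_append, seqCount_append, List.map_cons, seqCount_cons]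
      have hdisj : ∀ x, Lin ρ x → x ∈ ρ.conds[j].2.varList → x ∉ Xlist ρ (j+1) := by
        intro x hL hx hX
        have h0 := hcount x
        rw [Lin] at hL
        have h1 := (count_pos _ _).2 hx
        rcases mem_Xlist.1 hX with hX | ⟨d, hd, hX⟩
        · have := (count_pos _ _).2 hX
          omega
        · have := (seqCount_pos x ((ρ.conds.take j).map Prod.snd)).2
            ⟨d.2, List.mem_map_of_mem hd, (count_pos _ _).2 hX⟩
          omega
      obtain ⟨σ1, g1, g2⟩ := decomp (Lin ρ) τ ρ.conds[j].2 _ (by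
        intro x hx
        rw [Lin, hcount x] at hx
        omega) h3
      set σ' : V → Term F V := fun x => if x ∈ Xlist ρ (j+1) then σ x else σ1 x with hσ'
      have hmix : ∀ x ∈ Xlist ρ (j+1), mix (Lin ρ) σ τ' x = mix (Lin ρ) σ' τ x := by
        intro x hx
        simp [mix, hσ', hx, hτ x hx]
      have hs : ∀ i (hi : i ≤ j) (hi' : i < ρ.conds.length),
          (ρ.conds[i]).1.subst σ = (ρ.conds[i]).1.subst σ' := by
        intro i hi hi'
        apply subst_congr
        intro x hx
        have := hd i hi' x ((count_pos _ _).2 (by simpa using hx))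
        obtain ⟨t, ht, htx⟩ := (seqCount_pos _ _).1 this
        rw [count_pos] at htx
        have : x ∈ Xlist ρ (j+1) := by
          rcases List.mem_cons.1 ht with rfl | ht
          · exact mem_Xlist.2 (.inl htx)
          · obtain ⟨c, hc, rfl⟩ := List.mem_map.1 ht
            exact mem_Xlist.2 (.inr ⟨c, List.take_subset_take_left _ hi hc, htx⟩)
        simp [hσ', this]
      refine advance hρ hw hd hj (σ := σ') ⟨?_, ?_, ?_⟩
      · exact sim_congr_subst _ (fun x hx => hmix x (mem_Xlist.2 (.inl hx))) h1
      · intro d hdm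
        rw [htake, List.mem_append, List.mem_singleton] at hdm
        rcases hdm with hdm | rfl
        · have h := sim_congr_subst _ (fun x hx => hmix x (mem_Xlist.2 (.inr ⟨d, hdm, hx⟩))) (h2 d hdm)
          obtain ⟨i, hi, rfl⟩ := List.getElem_of_mem hdm
          simp only [List.length_take] at hi
          simp only [List.getElem_take] at h ⊢
          rwa [← hs i (by omega) (by omega)]
        · rw [← hs j le_rfl hlt]
          refine sim_congr_subst _ ?_ g2
          intro x hx
          by_cases hL : Lin ρ x
          · simp [mix, hL, hσ', hdisj x hL hx]
          · simp [mix, hL]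
      · intro x hx hL
        by_cases hX : x ∈ Xlist ρ (j+1)
        · simp only [hσ', hX, if_true]
          rw [hτ x hX]
          exact h4 x hX hL
        · simp only [hσ', hX, if_false]
          rw [mem_Xlist, htake] at hx
          rw [mem_Xlist] at hX
          push Not at hX
          rcases hx with hx | ⟨d, hdm, hx⟩
          · exact absurd hx hX.1
          · rw [List.mem_append, List.mem_singleton] at hdm
            rcases hdm with hdm | rfl
            · exact absurd hx (hX.2 d hdm)
            · exact g1 x hx hL

/-- Parallel steps of the unraveled system. -/
inductive Par (R : CTRS F V) : Term (UF F V) V → Term (UF F V) V → Prop where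
  | refl (u) : Par R u u
  | root {u u' ρ j τ} : ρ ∈ R → j ≤ ρ.conds.length → u = (ulhs ρ j).subst τ →
      u' = (urhs ρ j).subst τ → Par R u u'
  | congr {f : UF F V} {us us' : List (Term (UF F V) V)} : List.Forall₂ (Par R) us us' →
      Par R (.app f us) (.app f us')

theorem par_subst {τ τ' : V → Term (UF F V) V} (t : Term (UF F V) V)
    (h : ∀ x ∈ t.varList, Par R (τ x) (τ' x)) : Par R (t.subst τ) (t.subst τ') := by
  induction t using term_ind with
  | hv y => simpa [subst_var] using h y (by simp [mem_varList_var])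
  | ha f ts ih =>
    rw [subst_app, subst_app]
    refine .congr ?_
    rw [List.forall₂_map_left_iff, List.forall₂_map_right_iff, List.forall₂_same]
    exact fun t ht => ih t ht (fun x hx => h x (mem_varList_app.2 ⟨t, ht, hx⟩))

theorem par_map {X : List V} (hX : X.Nodup) (τ : V → Term (UF F V) V) :
    ∀ us, List.Forall₂ (Par R) (X.map τ) us →
    ∃ τ' : V → Term (UF F V) V, us = X.map τ' ∧ ∀ x ∈ X, Par R (τ x) (τ' x) := by
  induction X with
  | nil => intro us h; cases h; exact ⟨τ, by simp, by simp⟩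
  | cons x X ih =>
    intro us h
    rw [List.nodup_cons] at hX
    cases h with
    | @cons _ b _ bs h1 h2 =>
      obtain ⟨τ', rfl, h3⟩ := ih hX.2 _ h2
      have hne : ∀ y ∈ X, y ≠ x := fun y hy e => hX.1 (e ▸ hy)
      refine ⟨Function.update τ' x b, ?_, ?_⟩
      · simp only [List.map_cons, Function.update_self]
        congr 1
        apply List.map_congr_left
        intro y hy
        simp [Function.update_of_ne (hne y hy)]
      · intro y hy
        rcases List.mem_cons.1 hy with rfl | hy
        · simpa using h1
        · simpa [Function.update_of_ne (hne y hy)] using h3 y hy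

theorem sim_par (hD : IsDCTRS R) (hW : IsWLL R) {a : Term F V} {u} (h : Sim R a u) :
    ∀ u', Par R u u' → Sim R a u' := by
  induction h with
  | @var a x h =>
    intro u' hp
    have h0 : Sim R a (.var x) := .var h
    generalize hv : (Term.var x : Term (UF F V) V) = v at hp h0
    cases hp with
    | refl => exact h0
    | root h1 h2 h3 h4 => subst h3 h4; exact sim_root hD hW h1 h2 h0
    | congr _ => cases hv
  | @app a f us ps h1 h2 h3 ih =>
    intro u' hp
    have h0 : Sim R a (.app (Sum.inl f) us) := .app ps h1 h2 h3
    cases hp with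
    | refl => exact h0
    | root g1 g2 g3 g4 =>
      rw [g3] at h0
      subst g4
      exact sim_root hD hW g1 g2 h0
    | @congr _ _ us' g =>
      subst h2
      have : ∀ us', List.Forall₂ (Par R) (ps.map Prod.snd) us' →
          ∃ qs : List (Term F V × Term (UF F V) V), qs.map Prod.fst = ps.map Prod.fst ∧
            us' = qs.map Prod.snd ∧ ∀ q ∈ qs, Sim R q.1 q.2 := by
        clear g h0 h1 h3
        induction ps with
        | nil => intro us' h; cases h; exact ⟨[], by simp, by simp, by simp⟩
        | cons p ps ihp =>
          intro us' h
          cases h with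
          | @cons _ b _ bs g1 g2 =>
            obtain ⟨qs, e1, e2, e3⟩ := ihp (fun q hq => ih q (List.mem_cons_of_mem _ hq)) _ g2
            refine ⟨(p.1, b) :: qs, by simp [e1], by simp [e2], ?_⟩
            intro q hq
            rcases List.mem_cons.1 hq with rfl | hq
            · exact ih p List.mem_cons_self _ g1
            · exact e3 q hq
      obtain ⟨qs, e1, e2, e3⟩ := this us' g
      exact .app qs (e1 ▸ h1) e2 e3
  | @cond a ρ j i c σ τ u us hρ hc hi h1 h2 h3 h4 h5 ih1 ih2 ih3 ih4 =>
    intro u' hp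
    have h0 : Sim R a (.app (Sum.inr (ρ, i)) us) := .cond hρ hc hi h1 h2 h3 h4 h5
    cases hp with
    | refl => exact h0
    | root g1 g2 g3 g4 =>
      rw [g3] at h0
      subst g4
      exact sim_root hD hW g1 g2 h0
    | @congr _ _ us' g =>
      subst h5
      cases g with
      | @cons _ b _ bs g1 g2 =>
        obtain ⟨τ', rfl, hτ⟩ := par_map (List.nodup_dedup _) τ _ g2
        have hmix : ∀ x ∈ Xlist ρ (j+1),
            Par R (mix (Lin ρ) σ τ x) (mix (Lin ρ) σ τ' x) := by
          intro x hx
          by_cases hL : Lin ρ x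
          · simp only [mix, hL, if_true]; exact .refl _
          · simp only [mix, hL, if_false]; exact hτ x hx
        refine .cond (σ := σ) (τ := τ') (u := b) hρ hc hi ?_ ?_ (ih3 _ g1) ?_ rfl
        · exact ih1 _ (par_subst _ fun x hx =>
            hmix x (mem_Xlist.2 (.inl ((varList_liftF _).1 hx))))
        · intro d hd
          exact ih2 d hd _ (par_subst _ fun x hx =>
            hmix x (mem_Xlist.2 (.inr ⟨d, hd, (varList_liftF _).1 hx⟩)))
        · intro x hx hL
          exact ih4 x hx hL _ (hτ x hx)

theorem par_of_ctx {prev} {u u' : Term (UF F V) V} (h : CtxStep (RootStep (USys R) prev) u u') :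
    Par R u u' := by
  induction h with
  | root h =>
    obtain ⟨r, hr, σ, h1, h2, -⟩ := h
    simp only [USys, Set.mem_iUnion] at hr
    obtain ⟨ρ, hρ, j, hj, rfl⟩ := hr
    exact .root hρ hj h1 h2
  | @congr f pre post s t _ ih =>
    refine .congr (List.rel_append ?_ (.cons ih ?_))
    · exact List.forall₂_same.2 (fun _ _ => .refl _)
    · exact List.forall₂_same.2 (fun _ _ => .refl _)

theorem par_of_red {u u' : Term (UF F V) V} (h : Red (USys R) u u') : Par R u u' := by
  obtain ⟨n, hn⟩ := h
  cases n with
  | zero => exact hn.elim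
  | succ n => exact par_of_ctx hn

end WLLProof

/-- **Soundness of the simultaneous unraveling `U` for WLL DCTRSs.**
For every WLL deterministic CTRS `R` over `F` and terms `s, t ∈ T(F,V)`:
if `s →*_{U(R)} t` then `s →*_R t`. -/
theorem unraveling_sound_for_WLL_DCTRSs {F V : Type} [DecidableEq V]
    (R : CTRS F V) (hD : IsDCTRS R) (hW : IsWLL R)
    (s t : Term F V)
    (h : RedStar (USys R) (liftF s) (liftF t)) :
    RedStar R s t := by
  have key : ∀ u, RedStar (USys R) (liftF s) u → WLLProof.Sim R s u := by
    intro u hu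
    induction hu with
    | refl => exact WLLProof.sim_lift s
    | tail _ h2 ih => exact WLLProof.sim_par hD hW ih _ (WLLProof.par_of_red h2)
  have := WLLProof.sim_tb (key _ h)
  rwa [WLLProof.tb_lift] at this
end

section
/- A DCTRS R is U-WLL (i.e., U(R) is WLL) if and only if all unconditional rules of R are WLL and every conditional rule l → r ⇐ s1 ≈ t1, …, sk ≈ tk (k > 0) of R satisfies both: (a) the term sequence l, t1, …, t_{k−1} is linear (no variable occurs more than once in the whole sequence), and (b) |l, t1, …, tk|_x ≤ 1 for every variable x ∈ Var(r). -/
set_option autoImplicit false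

theorem count_app' {F V : Type} [DecidableEq V] (x : V) (f : F) (ts : List (Term F V)) :
    Term.count x (.app f ts) = seqCount x ts := by
  rw [Term.count, seqCount]
  congr 1
  simp

theorem count_mapF {F G V : Type} [DecidableEq V] (x : V) (g : F → G) :
    ∀ t : Term F V, Term.count x (t.mapF g) = Term.count x t
  | .var y => by simp [Term.mapF, Term.count]
  | .app f ts => by
      rw [Term.mapF, count_app', Term.count, seqCount, List.map_map]
      congr 1
      apply List.map_congr_left
      rintro ⟨t, ht⟩ _
      exact count_mapF x g t

theorem count_liftF {F V : Type} [DecidableEq V] (x : V) (t : Term F V) :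
    Term.count x (liftF t) = Term.count x t := count_mapF x _ t

theorem mem_varList {F V : Type} [DecidableEq V] (x : V) :
    ∀ t : Term F V, x ∈ t.varList ↔ 0 < Term.count x t
  | .var y => by
      by_cases h : y = x
      · simp [Term.varList, Term.count, h]
      · simp [Term.varList, Term.count, h, Ne.symm h]
  | .app f ts => by
      rw [Term.varList, Term.count, Nat.pos_iff_ne_zero, Ne, List.sum_eq_zero_iff]
      simp only [List.mem_flatMap, List.mem_map]
      push Not
      constructor
      · rintro ⟨⟨t, ht⟩, h1, h2⟩
        exact ⟨_, ⟨⟨t, ht⟩, h1, rfl⟩, Nat.pos_iff_ne_zero.mp ((mem_varList x t).1 h2)⟩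
      · rintro ⟨_, ⟨⟨t, ht⟩, h1, rfl⟩, h2⟩
        exact ⟨⟨t, ht⟩, h1, (mem_varList x t).2 (Nat.pos_iff_ne_zero.mpr h2)⟩

theorem seqCount_cons {F V : Type} [DecidableEq V] (x : V) (t : Term F V) (ts) :
    seqCount x (t :: ts) = Term.count x t + seqCount x ts := by simp [seqCount]

theorem seqCount_pos {F V : Type} [DecidableEq V] (x : V) (ts : List (Term F V)) :
    0 < seqCount x ts ↔ ∃ t ∈ ts, 0 < Term.count x t := by
  induction ts with
  | nil => simp [seqCount]
  | cons a l ih => simp [seqCount_cons, ← ih]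

/-- occurrences in `l, t1, …, tn` -/
def PC {F V : Type} [DecidableEq V] (ρ : CRule F V) (x : V) (n : ℕ) : ℕ :=
  seqCount x (ρ.lhs :: (ρ.conds.take n).map Prod.snd)

theorem PC_zero {F V : Type} [DecidableEq V] (ρ : CRule F V) (x : V) :
    PC ρ x 0 = Term.count x ρ.lhs := by simp [PC, seqCount]

theorem PC_succ {F V : Type} [DecidableEq V] (ρ : CRule F V) (x : V) (n : ℕ)
    (h : n < ρ.conds.length) :
    PC ρ x (n+1) = PC ρ x n + Term.count x (ρ.conds.getD n (dummyCond ρ)).2 := by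
  rw [PC, PC, List.take_add_one, List.getD_eq_getElem _ _ h, List.getElem?_eq_getElem h]
  simp only [seqCount, List.map_append, List.map_cons, List.sum_append, List.sum_cons,
    Option.toList_some, List.map_nil, List.sum_nil]
  omega

theorem PC_mono {F V : Type} [DecidableEq V] (ρ : CRule F V) (x : V) (m n : ℕ)
    (hmn : m ≤ n) (h : n ≤ ρ.conds.length) : PC ρ x m ≤ PC ρ x n := by
  induction n, hmn using Nat.le_induction with
  | base => exact le_rfl
  | succ n hn ih =>
    rw [PC_succ ρ x n (by omega)]
    have := ih (by omega)
    omega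

theorem mem_Xlist {F V : Type} [DecidableEq V] (ρ : CRule F V) (x : V) (n : ℕ) :
    x ∈ Xlist ρ (n+1) ↔ 0 < PC ρ x n := by
  rw [PC, seqCount_pos, Xlist]
  simp [mem_varList]

theorem seqCount_vars {F V : Type} [DecidableEq V] (x : V) (l : List V) :
    seqCount x (l.map (Term.var : V → Term F V)) = l.count x := by
  induction l with
  | nil => simp [seqCount]
  | cons a l ih => simp [seqCount_cons, ih, Term.count, List.count_cons, add_comm]

theorem count_uterm {F V : Type} [DecidableEq V] (ρ : CRule F V) (x : V) (n : ℕ)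
    (t : Term F V) :
    Term.count x (uterm ρ (n+1) t) = Term.count x t + if 0 < PC ρ x n then 1 else 0 := by
  rw [uterm, count_app', seqCount_cons, count_liftF, seqCount_vars]
  congr 1
  have hn : (Xlist ρ (n+1)).Nodup := List.nodup_dedup _
  rw [List.Nodup.count hn]
  simp only [mem_Xlist]

theorem WLL_uncond {F V : Type} [DecidableEq V] (l r : Term F V) :
    (CRule.mk l r []).WLL ↔ ∀ x, 0 < Term.count x r → Term.count x l = 1 := by
  simp [CRule.WLL, CRule.srcs, CRule.pats, seqCount]

theorem UWLL_rule {F V : Type} [DecidableEq V] (ρ : CRule F V) (hdet : ρ.Det)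
    (h3 : ρ.Type3) (hc : ρ.conds ≠ []) :
    (∀ j ≤ ρ.conds.length, ∀ x, 0 < Term.count x (urhs ρ j) → Term.count x (ulhs ρ j) = 1) ↔
      ((∀ x : V, seqCount x (ρ.lhs :: ρ.conds.dropLast.map Prod.snd) ≤ 1) ∧
           (∀ x : V, 0 < ρ.rhs.count x → seqCount x ρ.pats ≤ 1)) := by
  obtain ⟨k, hk⟩ : ∃ k, ρ.conds.length = k + 1 :=
    Nat.exists_eq_succ_of_ne_zero (by simpa using hc)
  have e1 : ∀ x, seqCount x (ρ.lhs :: ρ.conds.dropLast.map Prod.snd) = PC ρ x k := by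
    intro x; rw [PC, List.dropLast_eq_take, hk]; rfl
  have e2 : ∀ x, seqCount x ρ.pats = PC ρ x (k+1) := by
    intro x; rw [PC, CRule.pats, ← hk, List.take_length]
  have l0 : ∀ x, Term.count x (ulhs ρ 0) = PC ρ x 0 := by
    intro x; rw [PC_zero, ulhs, if_pos rfl, count_liftF]
  have ls : ∀ x j, Term.count x (ulhs ρ (j+1)) =
      Term.count x (ρ.conds.getD j (dummyCond ρ)).2 + if 0 < PC ρ x j then 1 else 0 := by
    intro x j; rw [ulhs, if_neg (by omega), count_uterm]; rfl
  have rk : ∀ x, Term.count x (urhs ρ (k+1)) = Term.count x ρ.rhs := by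
    intro x; rw [urhs, if_pos hk.symm, count_liftF]
  have rj : ∀ x j, j ≤ k → Term.count x (urhs ρ j) =
      Term.count x (ρ.conds.getD j (dummyCond ρ)).1 + if 0 < PC ρ x j then 1 else 0 := by
    intro x j hj; rw [urhs, if_neg (by omega), count_uterm]
  simp only [e1, e2]
  constructor
  · intro H
    have A : ∀ x j, j ≤ k → PC ρ x j ≤ 1 := by
      intro x j
      induction j with
      | zero =>
        intro _
        by_contra hh
        have := H 0 (by omega) x (by rw [rj x 0 (by omega), if_pos (by omega)]; omega)
        rw [l0] at this; omega
      | succ j ih =>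
        intro hj
        have i := ih (by omega)
        by_contra hh
        have := H (j+1) (by omega) x (by rw [rj x _ hj, if_pos (by omega)]; omega)
        rw [ls] at this
        rw [PC_succ ρ x j (by omega)] at hh
        split_ifs at this <;> omega
    refine ⟨fun x => A x k le_rfl, fun x hx => ?_⟩
    have := H (k+1) (by omega) x (by rw [rk]; exact hx)
    have i := A x k le_rfl
    rw [ls] at this
    rw [PC_succ ρ x k (by omega)]
    split_ifs at this <;> omega
  · rintro ⟨A, B⟩ j hj x hx
    have A' : ∀ j ≤ k, PC ρ x j ≤ 1 := fun j hj =>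
      (PC_mono ρ x j k hj (by omega)).trans (A x)
    have D : ∀ i (h : i < ρ.conds.length), 0 < Term.count x (ρ.conds[i]).1 → 0 < PC ρ x i :=
      fun i h => hdet i h x
    have key : PC ρ x j = 1 := by
      rcases Nat.lt_or_ge k j with h | h
      · obtain rfl : j = k + 1 := by omega
        rw [rk] at hx
        have b := B x hx
        have : 0 < PC ρ x (k+1) := by
          obtain ⟨t, ht, hp⟩ := (seqCount_pos _ _).1 (h3 x hx)
          rw [List.mem_cons, List.mem_flatMap] at ht
          rcases ht with rfl | ⟨c, hcm, ht⟩
          · rw [← PC_zero] at hp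
            exact hp.trans_le (PC_mono ρ x _ _ (by omega) (by omega))
          · simp only [List.mem_cons, List.not_mem_nil, or_false] at ht
            obtain ⟨i, hi, rfl⟩ := List.mem_iff_getElem.1 hcm
            rcases ht with rfl | rfl
            · exact (D i hi hp).trans_le (PC_mono ρ x _ _ (by omega) (by omega))
            · rw [← e2, seqCount_pos]
              exact ⟨_, List.mem_cons_of_mem _ (List.mem_map_of_mem hcm), hp⟩
        omega
      · have a := A' j h
        rw [rj x j h] at hx
        have d := D j (by omega)
        rw [List.getD_eq_getElem _ _ (by omega)] at hx
        split_ifs at hx with h0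
        · omega
        · exact absurd (d (by omega)) h0
    cases j with
    | zero => rw [l0, key]
    | succ j =>
      have a := A' j (by omega)
      rw [PC_succ ρ x j (by omega)] at key
      rw [ls]
      split_ifs <;> omega

/-- **Characterization of the `U`-WLL property.**
A DCTRS `R` is `U`-WLL iff all its unconditional rules are WLL and every
conditional rule `l → r ⇐ s1 ≈ t1, …, sk ≈ tk` (k > 0) satisfies:
(a) the sequence `l, t1, …, t_{k−1}` is linear, and
(b) `|l, t1, …, tk|_x ≤ 1` for every variable `x ∈ Var(r)`. -/
theorem UWLL_characterization {F V : Type} [DecidableEq V]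
    (R : CTRS F V) (hD : IsDCTRS R) :
    IsUWLL R ↔
      ((∀ ρ ∈ R, ρ.conds = [] → ρ.WLL) ∧
       (∀ ρ ∈ R, ρ.conds ≠ [] →
          ((∀ x : V, seqCount x (ρ.lhs :: ρ.conds.dropLast.map Prod.snd) ≤ 1) ∧
           (∀ x : V, 0 < ρ.rhs.count x → seqCount x ρ.pats ≤ 1)))) := by
  have hU : IsUWLL R ↔ ∀ ρ ∈ R, ∀ j ≤ ρ.conds.length, ∀ x,
      0 < Term.count x (urhs ρ j) → Term.count x (ulhs ρ j) = 1 := by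
    constructor
    · intro H ρ hρ j hj
      exact (WLL_uncond _ _).1 (H _ (Set.mem_biUnion hρ ⟨j, hj, rfl⟩))
    · intro H r hr
      obtain ⟨ρ, hρ, j, hj, rfl⟩ := Set.mem_iUnion₂.1 hr
      exact (WLL_uncond _ _).2 (H ρ hρ j hj)
  have h0 : ∀ ρ : CRule F V, ρ.conds = [] → (ρ.WLL ↔ ∀ j ≤ ρ.conds.length, ∀ x,
      0 < Term.count x (urhs ρ j) → Term.count x (ulhs ρ j) = 1) := by
    rintro ⟨l, r, c⟩ (rfl : c = [])
    rw [WLL_uncond]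
    simp [urhs, ulhs, count_liftF]
  rw [hU]
  constructor
  · intro H
    exact ⟨fun ρ hρ hc => (h0 ρ hc).2 (H ρ hρ),
      fun ρ hρ hc => (UWLL_rule ρ (hD ρ hρ).1 (hD ρ hρ).2.1 hc).1 (H ρ hρ)⟩
  · rintro ⟨H1, H2⟩ ρ hρ
    by_cases hc : ρ.conds = []
    · exact (h0 ρ hc).1 (H1 ρ hρ hc)
    · exact (UWLL_rule ρ (hD ρ hρ).1 (hD ρ hρ).2.1 hc).2 (H2 ρ hρ hc)
end

section
/- Let R be a WLL DCTRS over a signature F and s, t ∈ T(F,V). If s reduces to t in n steps at level m of the level-stratified reduction relation of R (s →^n_{(m),R} t), then s →*_{T(R)} t. -/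
set_option autoImplicit false

/-- Embedding of a rule over `F` into the signature `F ⊕ ℕ` extended with the
fresh tuple constructors `tuple_j` (encoded as `Sum.inr j`). -/
def CRule.liftT {F V : Type} (ρ : CRule F V) : CRule (F ⊕ ℕ) V :=
  ⟨ρ.lhs.mapF Sum.inl, ρ.rhs.mapF Sum.inl,
   ρ.conds.map (fun c => (c.1.mapF Sum.inl, c.2.mapF Sum.inl))⟩

/-- The variable `x` occurs somewhere in the rule `ρ`. -/
def OccursInRule {F V : Type} [DecidableEq V] (ρ : CRule F V) (x : V) : Prop :=
  0 < seqCount x (ρ.lhs :: ρ.rhs :: ρ.conds.flatMap (fun c => [c.1, c.2]))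

/-- `ρ'` is a result of applying the transformation `𝕋` to the rule `ρ`:
unconditional rules are kept (embedded into the extended signature); for a
conditional rule, every occurrence of a variable occurring more than once in
`l, t1, …, tk` is replaced by a distinct fresh variable (yielding `l'` and
`t'_1, …, t'_k`), and the condition
`tuple_j(x1,…,xj) ≈ tuple_j(x1σ,…,xjσ)` is appended, where `x1, …, xj` are the
introduced fresh variables and `σ` is the renaming mapping them back to the
original variables. -/
def IsTRule {F V : Type} [DecidableEq V] (ρ : CRule F V) (ρ' : CRule (F ⊕ ℕ) V) : Prop :=
  (ρ.conds = [] ∧ ρ' = ρ.liftT) ∨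
  (ρ.conds ≠ [] ∧
    ∃ (xs : List V) (σ : V → V) (l' : Term (F ⊕ ℕ) V) (ts' : List (Term (F ⊕ ℕ) V)),
      xs.Nodup ∧
      (∀ x ∈ xs, ¬ OccursInRule ρ x) ∧
      (∀ x : V, x ∉ xs → σ x = x) ∧
      ts'.length = ρ.conds.length ∧
      l'.rename σ = ρ.lhs.mapF Sum.inl ∧
      (∀ (i : ℕ) (h : i < ρ.conds.length) (h' : i < ts'.length),
        (ts'.get ⟨i, h'⟩).rename σ = ((ρ.conds.get ⟨i, h⟩).2).mapF Sum.inl) ∧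
      (∀ x ∈ xs, seqCount x (l' :: ts') = 1) ∧
      (∀ x : V, x ∉ xs →
        seqCount x (l' :: ts') =
          if seqCount x ρ.liftT.pats ≤ 1 then seqCount x ρ.liftT.pats else 0) ∧
      ρ' = ⟨l', ρ.rhs.mapF Sum.inl,
            (List.zip (ρ.conds.map (fun c => c.1.mapF Sum.inl)) ts') ++
              [(.app (Sum.inr xs.length) (xs.map Term.var),
                .app (Sum.inr xs.length) (xs.map (fun x => Term.var (σ x))))]⟩)

/-- `R'` is a result of applying the transformation `𝕋` to the CTRS `R`,
i.e., `R' = { 𝕋(ρ) : ρ ∈ R }`. -/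
def IsT {F V : Type} [DecidableEq V] (R : CTRS F V) (R' : CTRS (F ⊕ ℕ) V) : Prop :=
  (∀ ρ ∈ R, ∃ ρ' ∈ R', IsTRule ρ ρ') ∧ (∀ ρ' ∈ R', ∃ ρ ∈ R, IsTRule ρ ρ')

namespace TSim
variable {F G V W U : Type}

theorem ind {P : Term F V → Prop} (hv : ∀ x, P (.var x))
    (ha : ∀ f ts, (∀ t ∈ ts, P t) → P (.app f ts)) : ∀ t, P t
  | .var x => hv x
  | .app f ts => ha f ts (fun t _ => ind hv ha t)

theorem subst_app (σ : V → Term F W) (f : F) (ts : List (Term F V)) :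
    (Term.app f ts).subst σ = .app f (ts.map (Term.subst σ)) := by
  simp [Term.subst]

theorem mapF_app (g : F → G) (f : F) (ts : List (Term F V)) :
    (Term.app f ts).mapF g = .app (g f) (ts.map (Term.mapF g)) := by
  simp [Term.mapF]

theorem count_app [DecidableEq V] (x : V) (f : F) (ts : List (Term F V)) :
    (Term.app f ts).count x = seqCount x ts := by
  simp [Term.count, seqCount]

theorem seqCount_pos [DecidableEq V] (x : V) (ts : List (Term F V)) :
    0 < seqCount x ts ↔ ∃ t ∈ ts, 0 < t.count x := by
  induction ts with
  | nil => simp [seqCount]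
  | cons a l ih =>
    have : seqCount x (a :: l) = a.count x + seqCount x l := by simp [seqCount]
    simp only [List.mem_cons, exists_eq_or_imp]
    rw [this, ← ih]
    omega

theorem subst_rename (g : V → W) (τ : W → Term F U) (t : Term F V) :
    (t.rename g).subst τ = t.subst (fun x => τ (g x)) := by
  unfold Term.rename
  induction t using ind with
  | hv x => simp [Term.subst]
  | ha f ts ih => simpa [subst_app] using ih

theorem subst_mapF (g : F → G) (τ : V → Term F W) (t : Term F V) :
    (t.mapF g).subst (fun x => (τ x).mapF g) = (t.subst τ).mapF g := by
  induction t using ind with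
  | hv x => simp [Term.subst, Term.mapF]
  | ha f ts ih => simpa [subst_app, mapF_app] using ih

theorem count_mapF [DecidableEq V] (g : F → G) (x : V) (t : Term F V) :
    0 < (t.mapF g).count x ↔ 0 < t.count x := by
  induction t using ind with
  | hv y => simp [Term.mapF, Term.count]
  | ha f ts ih =>
    rw [mapF_app, count_app, count_app, seqCount_pos, seqCount_pos]
    constructor
    · rintro ⟨t, ht, h⟩
      obtain ⟨u, hu, rfl⟩ := List.mem_map.1 ht
      exact ⟨u, hu, (ih u hu).1 h⟩
    · rintro ⟨t, ht, h⟩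
      exact ⟨_, List.mem_map_of_mem ht, (ih t ht).2 h⟩

theorem count_rename [DecidableEq V] [DecidableEq W] (g : V → W) (x : V) (t : Term F V) :
    0 < t.count x → 0 < (t.rename g).count (g x) := by
  unfold Term.rename
  induction t using ind with
  | hv y =>
    by_cases h : y = x <;> simp [Term.subst, Term.count, h]
  | ha f ts ih =>
    rw [subst_app, count_app, count_app, seqCount_pos, seqCount_pos]
    rintro ⟨t, ht, h⟩
    exact ⟨_, List.mem_map_of_mem ht, ih t ht h⟩

theorem subst_congr [DecidableEq V] (τ τ' : V → Term F W) (t : Term F V) :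
    (∀ x, 0 < t.count x → τ x = τ' x) → t.subst τ = t.subst τ' := by
  induction t using ind with
  | hv y => intro h; simpa [Term.subst] using h y (by simp [Term.count])
  | ha f ts ih =>
    intro h
    rw [subst_app, subst_app]
    congr 1
    refine List.map_congr_left fun t ht => ih t ht fun x hx => h x ?_
    rw [count_app, seqCount_pos]
    exact ⟨t, ht, hx⟩

theorem root_sim [DecidableEq V] (R : CTRS F V) (R' : CTRS (F ⊕ ℕ) V)
    (hT : ∀ ρ ∈ R, ∃ ρ' ∈ R', IsTRule ρ ρ')
    (p : Term F V → Term F V → Prop) (p' : Term (F ⊕ ℕ) V → Term (F ⊕ ℕ) V → Prop)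
    (hp : ∀ s t, p s t → p' (s.mapF Sum.inl) (t.mapF Sum.inl))
    (s t : Term F V) (h : RootStep R p s t) :
    RootStep R' p' (s.mapF Sum.inl) (t.mapF Sum.inl) := by
  obtain ⟨ρ, hρ, τ, rfl, rfl, hc⟩ := h
  obtain ⟨ρ', hρ', h⟩ := hT ρ hρ
  have hps : ∀ c ∈ ρ.conds, Relation.ReflTransGen p' ((c.1.subst τ).mapF Sum.inl)
      ((c.2.subst τ).mapF Sum.inl) := fun c hcm => (hc c hcm).lift _ hp
  rcases h with ⟨h0, rfl⟩ | ⟨-, xs, σ, l', ts', -, hfresh, hid, hlen, hl, hts, hone, -, rfl⟩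
  · refine ⟨_, hρ', fun x => (τ x).mapF Sum.inl, ?_, ?_, ?_⟩
    · exact (subst_mapF _ _ _).symm
    · exact (subst_mapF _ _ _).symm
    · simp [CRule.liftT, h0]
  · have hσ : ∀ x, OccursInRule ρ x → σ x = x := fun x hx =>
      hid x fun hm => hfresh x hm hx
    have hsrc : ∀ u : Term F V, (∀ x, 0 < u.count x → OccursInRule ρ x) →
        (u.mapF Sum.inl).subst (fun x => (τ (σ x)).mapF (Sum.inl : F → F ⊕ ℕ))
          = (u.subst τ).mapF Sum.inl := by
      intro u hu
      rw [← subst_mapF]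
      apply subst_congr
      intro x hx
      rw [hσ x (hu x ((count_mapF _ _ _).1 hx))]
    have hpat : ∀ (u' : Term (F ⊕ ℕ) V) (u : Term F V), u'.rename σ = u.mapF Sum.inl →
        u'.subst (fun x => (τ (σ x)).mapF (Sum.inl : F → F ⊕ ℕ))
          = (u.subst τ).mapF Sum.inl := by
      intro u' u h
      rw [← subst_mapF, ← h, subst_rename]
    have hocc : ∀ x u, (u = ρ.lhs ∨ u = ρ.rhs ∨ ∃ c ∈ ρ.conds, u = c.1 ∨ u = c.2) →
        0 < u.count x → OccursInRule ρ x := by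
      intro x u hu hx
      unfold OccursInRule
      rw [seqCount_pos]
      refine ⟨u, ?_, hx⟩
      simpa using hu
    refine ⟨_, hρ', fun x => (τ (σ x)).mapF Sum.inl, ?_, ?_, ?_⟩
    · exact (hpat _ _ hl).symm
    · exact (hsrc _ fun x hx => hocc x _ (Or.inr (Or.inl rfl)) hx).symm
    · intro c hcm
      rcases List.mem_append.1 hcm with hcm | hcm
      · obtain ⟨i, hi, rfl⟩ := List.getElem_of_mem hcm
        have hi2 : i < ρ.conds.length := by simp at hi; omega
        have hi3 : i < ts'.length := by omega
        have hm := List.getElem_mem hi2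
        simp only [List.getElem_zip, List.getElem_map]
        rw [hsrc _ fun x hx => hocc x _ (Or.inr (Or.inr ⟨_, hm, Or.inl rfl⟩)) hx,
          hpat ts'[i] ρ.conds[i].2 (hts i hi2 hi3)]
        exact hps _ hm
      · rw [List.mem_singleton] at hcm
        subst hcm
        have : ∀ x ∈ xs, σ (σ x) = σ x := by
          intro x hx
          apply hσ
          have h1 : 0 < seqCount x (l' :: ts') := by rw [hone x hx]; exact one_pos
          obtain ⟨u, hu, hxu⟩ := (seqCount_pos _ _).1 h1
          have h2 := count_rename σ x u hxu
          rcases List.mem_cons.1 hu with rfl | hu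
          · rw [hl, count_mapF] at h2
            exact hocc _ _ (Or.inl rfl) h2
          · obtain ⟨i, hi, rfl⟩ := List.getElem_of_mem hu
            have hi2 : i < ρ.conds.length := by omega
            have h3 := hts i hi2 hi
            simp only [List.get_eq_getElem] at h3
            rw [h3, count_mapF] at h2
            exact hocc _ _ (Or.inr (Or.inr ⟨_, List.getElem_mem hi2, Or.inr rfl⟩)) h2
        simp only [subst_app, List.map_map]
        have he : List.map (Term.subst (fun x => (τ (σ x)).mapF (Sum.inl : F → F ⊕ ℕ)) ∘ Term.var) xs
            = List.map (Term.subst (fun x => (τ (σ x)).mapF (Sum.inl : F → F ⊕ ℕ)) ∘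
                (fun x => Term.var (σ x))) xs := by
          refine List.map_congr_left fun x hx => ?_
          simp [Term.subst, this x hx]
        rw [he]

theorem level_sim [DecidableEq V] (R : CTRS F V) (R' : CTRS (F ⊕ ℕ) V)
    (hT : ∀ ρ ∈ R, ∃ ρ' ∈ R', IsTRule ρ ρ') (m : ℕ) :
    ∀ s t, LevelStep R m s t → LevelStep R' m (s.mapF Sum.inl) (t.mapF Sum.inl) := by
  induction m with
  | zero => intro s t h; exact h
  | succ m ih =>
    intro s t h
    simp only [LevelStep] at h ⊢
    induction h with
    | root h => exact .root (root_sim R R' hT _ _ ih _ _ h)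
    | congr _ ih2 =>
      simp only [mapF_app, List.map_append, List.map_cons]
      exact .congr ih2

end TSim

/-- **Claim (i) of Theorem `𝕋`-equivalence.**
Let `R` be a WLL DCTRS over `F` and `s, t ∈ T(F,V)`. If `s →^n_{(m),R} t`
(n steps at level m of the stratified reduction of `R`), then `s →*_{𝕋(R)} t`. -/
theorem T_simulates_R {F V : Type} [DecidableEq V]
    (R : CTRS F V) (R' : CTRS (F ⊕ ℕ) V)
    (hD : IsDCTRS R) (hW : IsWLL R) (hT : IsT R R')
    (s t : Term F V) (m n : ℕ)
    (h : NFold (LevelStep R m) n s t) :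
    RedStar R' (s.mapF Sum.inl) (t.mapF Sum.inl) := by
  induction n generalizing s with
  | zero => cases h; exact .refl
  | succ n ih =>
    obtain ⟨b, hb, h⟩ := h
    exact .head ⟨m, TSim.level_sim R R' hT.1 m _ _ hb⟩ (ih b h)
end

section
/- Let R be a WLL DCTRS over a signature F and s, t ∈ T(F,V). If s reduces to t in n steps at level m of the level-stratified reduction relation of T(R) (s →^n_{(m),T(R)} t), then s →*_R t. -/
set_option autoImplicit false

theorem Term.ind' {F V : Type} {P : Term F V → Prop} (hv : ∀ x, P (.var x))
    (ha : ∀ f ts, (∀ t ∈ ts, P t) → P (.app f ts)) : ∀ t, P t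
  | .var x => hv x
  | .app f ts => ha f ts (fun t _ => Term.ind' hv ha t)

theorem subst_app' {F V W : Type} (σ : V → Term F W) (f : F) (ts : List (Term F V)) :
    (Term.app f ts).subst σ = .app f (ts.map (Term.subst σ)) := by
  simp [Term.subst]

theorem mapF_app' {F V G : Type} (g : F → G) (f : F) (ts : List (Term F V)) :
    (Term.app f ts).mapF g = .app (g f) (ts.map (Term.mapF g)) := by
  simp [Term.mapF]

/-- Projection back to the original signature. -/
def proj {F V : Type} (d : Term F V) : Term (F ⊕ ℕ) V → Term F V
  | .var x => .var x
  | .app (.inl f) ts => .app f (ts.attach.map (fun ⟨t, _⟩ => proj d t))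
  | .app (.inr _) _ => d

theorem proj_inl {F V : Type} (d : Term F V) (f : F) (ts : List (Term (F ⊕ ℕ) V)) :
    proj d (.app (.inl f) ts) = .app f (ts.map (proj d)) := by
  simp [proj]

theorem proj_inr {F V : Type} (d : Term F V) (j : ℕ) (ts : List (Term (F ⊕ ℕ) V)) :
    proj d (.app (.inr j) ts) = d := by
  simp [proj]

theorem proj_subst {F V : Type} (d : Term F V) (τ : V → Term (F ⊕ ℕ) V) (a : Term F V) :
    proj d ((a.mapF Sum.inl).subst τ) = a.subst (fun x => proj d (τ x)) := by
  induction a using Term.ind' with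
  | hv x => simp [Term.mapF, Term.subst]
  | ha f ts ih =>
    simp only [mapF_app', subst_app', proj_inl, List.map_map]
    congr 1
    exact List.map_congr_left ih

theorem proj_mapF {F V : Type} (d : Term F V) (a : Term F V) :
    proj d (a.mapF Sum.inl) = a := by
  induction a using Term.ind' with
  | hv x => simp [Term.mapF, proj]
  | ha f ts ih =>
    simp only [mapF_app', proj_inl, List.map_map]
    congr 1
    conv_rhs => rw [← List.map_id ts]
    exact List.map_congr_left ih

theorem rtg_mono {α : Type} {r r' : α → α → Prop} {a b : α}
    (h : Relation.ReflTransGen r a b) (hr : ∀ a b, r a b → r' a b) :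
    Relation.ReflTransGen r' a b := by
  induction h with
  | refl => exact .refl
  | tail _ h1 ih => exact ih.tail (hr _ _ h1)

theorem CtxStep.mono' {F V : Type} {r r' : Term F V → Term F V → Prop}
    (h : ∀ a b, r a b → r' a b) {a b : Term F V} (hab : CtxStep r a b) : CtxStep r' a b := by
  induction hab with
  | root h1 => exact .root (h _ _ h1)
  | congr _ ih => exact .congr ih

theorem level_succ {F V : Type} (R : CTRS F V) (n : ℕ) :
    ∀ a b, LevelStep R n a b → LevelStep R (n+1) a b := by
  induction n with
  | zero => intro a b h; exact h.elim
  | succ n ih =>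
    intro a b h
    refine CtxStep.mono' ?_ h
    rintro a b ⟨ρ, hρ, σ, h1, h2, h3⟩
    exact ⟨ρ, hρ, σ, h1, h2, fun c hc => rtg_mono (h3 c hc) ih⟩

theorem level_mono {F V : Type} (R : CTRS F V) {n k : ℕ} (hnk : n ≤ k) :
    ∀ a b, LevelStep R n a b → LevelStep R k a b := by
  induction hnk with
  | refl => exact fun a b h => h
  | step _ ih => exact fun a b h => level_succ R _ a b (ih a b h)

theorem redStar_level {F V : Type} (R : CTRS F V) {a b : Term F V} (h : RedStar R a b) :
    ∃ n, Relation.ReflTransGen (LevelStep R n) a b := by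
  induction h with
  | refl => exact ⟨0, .refl⟩
  | tail _ h ih =>
    obtain ⟨n, ih⟩ := ih
    obtain ⟨k, hk⟩ := h
    exact ⟨max n k, (rtg_mono ih (level_mono R (le_max_left _ _))).tail
      (level_mono R (le_max_right _ _) _ _ hk)⟩

theorem conds_level {F V : Type} (R : CTRS F V) (cs : List (Term F V × Term F V))
    (h : ∀ c ∈ cs, RedStar R c.1 c.2) :
    ∃ n, ∀ c ∈ cs, Relation.ReflTransGen (LevelStep R n) c.1 c.2 := by
  induction cs with
  | nil => exact ⟨0, by simp⟩
  | cons c cs ih =>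
    obtain ⟨n, hn⟩ := ih (fun c hc => h c (List.mem_cons_of_mem _ hc))
    obtain ⟨k, hk⟩ := redStar_level R (h c List.mem_cons_self)
    refine ⟨max n k, ?_⟩
    intro c' hc'
    rcases List.mem_cons.1 hc' with rfl | hc'
    · exact rtg_mono hk (level_mono R (le_max_right _ _))
    · exact rtg_mono (hn _ hc') (level_mono R (le_max_left _ _))

theorem red_rule {F V : Type} (R : CTRS F V) (ρ : CRule F V) (hρ : ρ ∈ R) (σ : V → Term F V)
    (h : ∀ c ∈ ρ.conds, RedStar R (c.1.subst σ) (c.2.subst σ)) :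
    RedStar R (ρ.lhs.subst σ) (ρ.rhs.subst σ) := by
  obtain ⟨n, hn⟩ := conds_level R (ρ.conds.map (fun c => (c.1.subst σ, c.2.subst σ))) (by
    intro c hc
    obtain ⟨c', hc', rfl⟩ := List.mem_map.1 hc
    exact h c' hc')
  refine .single ⟨n+1, .root ⟨ρ, hρ, σ, rfl, rfl, ?_⟩⟩
  intro c hc
  exact hn _ (List.mem_map.2 ⟨c, hc, rfl⟩)

theorem red_congr {F V : Type} (R : CTRS F V) {f : F} {pre post : List (Term F V)}
    {a b : Term F V} (h : Red R a b) :
    Red R (.app f (pre ++ a :: post)) (.app f (pre ++ b :: post)) := by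
  obtain ⟨n, h⟩ := h
  cases n with
  | zero => exact h.elim
  | succ n => exact ⟨n+1, CtxStep.congr h⟩

theorem redStar_congr {F V : Type} (R : CTRS F V) {f : F} {pre post : List (Term F V)}
    {a b : Term F V} (h : RedStar R a b) :
    RedStar R (.app f (pre ++ a :: post)) (.app f (pre ++ b :: post)) := by
  induction h with
  | refl => exact .refl
  | tail _ h1 ih => exact ih.tail (red_congr R h1)

theorem redStar_args {F V : Type} (R : CTRS F V) {f : F} {as bs : List (Term F V)}
    (h : List.Forall₂ (RedStar R) as bs) : ∀ pre,
    RedStar R (.app f (pre ++ as)) (.app f (pre ++ bs)) := by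
  induction h with
  | nil => intro pre; exact .refl
  | @cons a b as bs hab _ ih =>
    intro pre
    have h1 := redStar_congr R (f := f) (pre := pre) (post := as) hab
    have h2 := ih (pre ++ [b])
    simp only [List.append_assoc, List.singleton_append] at h2
    exact h1.trans h2

theorem key {F V : Type} (R : CTRS F V) (d : Term F V) (τ : V → Term (F ⊕ ℕ) V) (σ : V → V)
    (hσ : ∀ x, RedStar R (proj d (τ x)) (proj d (τ (σ x)))) (u : Term (F ⊕ ℕ) V) :
    ∀ a : Term F V, u.rename σ = a.mapF Sum.inl →
    RedStar R (proj d (u.subst τ)) (a.subst (fun x => proj d (τ x))) := by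
  induction u using Term.ind' with
  | hv x =>
    intro a h
    cases a with
    | var y =>
      simp [Term.rename, Term.subst, Term.mapF] at h
      subst h
      simpa [Term.subst] using hσ x
    | app f ts => simp [Term.rename, Term.subst, Term.mapF] at h
  | ha f us ih =>
    intro a h
    cases a with
    | var y => simp [Term.rename, Term.subst, Term.mapF] at h
    | app g ts =>
      simp only [Term.rename, subst_app', mapF_app', Term.app.injEq] at h
      obtain ⟨rfl, h⟩ := h
      simp only [subst_app', proj_inl, List.map_map]
      refine redStar_args R ?_ []
      induction us generalizing ts with
      | nil =>
        cases ts with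
        | nil => exact .nil
        | cons => simp at h
      | cons u us ih2 =>
        cases ts with
        | nil => simp at h
        | cons t ts =>
          simp only [List.map_cons, List.cons.injEq] at h
          exact .cons (ih u List.mem_cons_self t h.1)
            (ih2 (fun t ht => ih t (List.mem_cons_of_mem _ ht)) ts h.2)

theorem lhs_ne_inr {F V : Type} [DecidableEq V] {ρ : CRule F V} {ρ' : CRule (F ⊕ ℕ) V}
    (hn : ρ.LhsNonVar) (h : IsTRule ρ ρ') (τ : V → Term (F ⊕ ℕ) V) (j : ℕ)
    (as : List (Term (F ⊕ ℕ) V)) : ρ'.lhs.subst τ ≠ .app (.inr j) as := by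
  have hl : ∃ σ : V → V, ∃ f us, ρ'.lhs.rename σ = .app (.inl f) us := by
    cases hc : ρ.lhs with
    | var x => exact (hn x hc).elim
    | app f ts =>
      rcases h with ⟨_, rfl⟩ | ⟨_, xs, σ, l', ts', _, _, _, _, hl, _, _, _, rfl⟩
      · exact ⟨id, f, _, by
          simp only [CRule.liftT, hc, mapF_app', Term.rename, subst_app']
          rfl⟩
      · exact ⟨σ, f, _, by rw [hl, hc, mapF_app']⟩
  obtain ⟨σ, f, us, hl⟩ := hl
  cases hc : ρ'.lhs with
  | var x => simp [hc, Term.rename, Term.subst] at hl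
  | app g ts =>
    simp only [hc, Term.rename, subst_app', Term.app.injEq] at hl
    obtain ⟨rfl, _⟩ := hl
    simp [subst_app']

theorem tuple_step {F V : Type} [DecidableEq V] {R : CTRS F V} {R' : CTRS (F ⊕ ℕ) V}
    (hD : IsDCTRS R) (hT : IsT R R') (m j : ℕ) (as : List (Term (F ⊕ ℕ) V))
    (b : Term (F ⊕ ℕ) V) (h : LevelStep R' m (.app (.inr j) as) b) :
    ∃ bs, b = .app (.inr j) bs ∧
      List.Forall₂ (Relation.ReflTransGen (LevelStep R' m)) as bs := by
  cases m with
  | zero => exact h.elim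
  | succ m =>
    generalize ha : Term.app (Sum.inr j) as = a at h
    cases h with
    | root h =>
      obtain ⟨ρ', hρ', τ, h1, _⟩ := h
      obtain ⟨ρ, hρ, hh⟩ := hT.2 ρ' hρ'
      exact (lhs_ne_inr (hD ρ hρ).2.2 hh τ j as (by rw [ha, h1])).elim
    | @congr f pre post s t h =>
      simp only [Term.app.injEq] at ha
      obtain ⟨rfl, rfl⟩ := ha
      refine ⟨_, rfl, List.rel_append (List.forall₂_refl _) (.cons (.single h) (List.forall₂_refl _))⟩

theorem tuple_star {F V : Type} [DecidableEq V] {R : CTRS F V} {R' : CTRS (F ⊕ ℕ) V}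
    (hD : IsDCTRS R) (hT : IsT R R') (m j : ℕ) (as : List (Term (F ⊕ ℕ) V))
    (b : Term (F ⊕ ℕ) V)
    (h : Relation.ReflTransGen (LevelStep R' m) (.app (.inr j) as) b) :
    ∃ bs, b = .app (.inr j) bs ∧
      List.Forall₂ (Relation.ReflTransGen (LevelStep R' m)) as bs := by
  induction h with
  | refl => exact ⟨as, rfl, List.forall₂_refl _⟩
  | tail h0 h ih =>
    obtain ⟨bs, rfl, hbs⟩ := ih
    obtain ⟨cs, rfl, hcs⟩ := tuple_step hD hT m j bs _ h
    refine ⟨cs, rfl, ?_⟩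
    clear h h0
    induction hbs generalizing cs with
    | nil => cases hcs; exact .nil
    | cons h1 _ ih =>
      cases hcs with
      | cons h2 h3 => exact .cons (h1.trans h2) (ih _ h3)

theorem star_lift {F V : Type} {R : CTRS F V} {r : Term (F ⊕ ℕ) V → Term (F ⊕ ℕ) V → Prop}
    {d : Term F V} (h : ∀ u v, r u v → RedStar R (proj d u) (proj d v))
    {u v : Term (F ⊕ ℕ) V} (huv : Relation.ReflTransGen r u v) :
    RedStar R (proj d u) (proj d v) := by
  induction huv with
  | refl => exact .refl
  | tail _ h1 ih => exact ih.trans (h _ _ h1)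

theorem level_sim {F V : Type} [DecidableEq V] {R : CTRS F V} {R' : CTRS (F ⊕ ℕ) V}
    (hD : IsDCTRS R) (hT : IsT R R') (d : Term F V) (m : ℕ) :
    ∀ u v, LevelStep R' m u v → RedStar R (proj d u) (proj d v) := by
  induction m with
  | zero => intro u v h; exact h.elim
  | succ m ihm =>
    intro u v h
    change CtxStep _ u v at h
    induction h with
    | @congr f pre post s t _ ih =>
      cases f with
      | inr j => simp only [proj_inr]; exact .refl
      | inl f =>
        simp only [proj_inl, List.map_append, List.map_cons]
        exact redStar_congr R ih
    | root h =>
      obtain ⟨ρ', hρ', τ, rfl, rfl, hc⟩ := h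
      obtain ⟨ρ, hρ, hh⟩ := hT.2 ρ' hρ'
      rcases hh with ⟨h0, rfl⟩ | ⟨_, xs, σ, l', ts', _, _, hσ, hlen, hl, hts, _, _, rfl⟩
      · simp only [CRule.liftT, proj_subst]
        exact red_rule R ρ hρ _ (by simp [h0])
      · simp only [proj_subst]
        have hx : ∀ x, RedStar R (proj d (τ x)) (proj d (τ (σ x))) := by
          intro x
          by_cases hx : x ∈ xs
          · have h1 := hc _ (List.mem_append_right _ List.mem_cons_self)
            simp only [subst_app', List.map_map] at h1
            obtain ⟨bs, hb, hf⟩ := tuple_star hD hT m _ _ _ h1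
            simp only [Term.app.injEq, true_and] at hb
            subst hb
            rw [List.forall₂_map_left_iff, List.forall₂_map_right_iff, List.forall₂_same] at hf
            have h2 := hf x hx
            simp only [Function.comp, Term.subst] at h2
            exact star_lift ihm h2
          · rw [hσ x hx]; exact .refl
        refine (key R d τ σ hx l' _ hl).trans (red_rule R ρ hρ _ ?_)
        intro c hcm
        obtain ⟨i, hi, rfl⟩ := List.mem_iff_getElem.1 hcm
        have hi' : i < ts'.length := hlen ▸ hi
        have h1 := hc ((ρ.conds[i].1).mapF Sum.inl, ts'[i]) (by
          refine List.mem_append_left _ (List.mem_iff_getElem.2 ⟨i, ?_, ?_⟩)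
          · simp [hi, hi']
          · simp)
        have h2 := star_lift ihm h1
        simp only [proj_subst] at h2
        exact h2.trans (key R d τ σ hx _ _ (hts i hi hi'))

/-- **Claim (ii) of Theorem `𝕋`-equivalence.**
Let `R` be a WLL DCTRS over `F` and `s, t ∈ T(F,V)`. If `s →^n_{(m),𝕋(R)} t`
(n steps at level m of the stratified reduction of `𝕋(R)`), then `s →*_R t`. -/
theorem R_simulates_T {F V : Type} [DecidableEq V]
    (R : CTRS F V) (R' : CTRS (F ⊕ ℕ) V)
    (hD : IsDCTRS R) (hW : IsWLL R) (hT : IsT R R')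
    (s t : Term F V) (m n : ℕ)
    (h : NFold (LevelStep R' m) n (s.mapF Sum.inl) (t.mapF Sum.inl)) :
    RedStar R s t := by
  have hs : ∀ (n : ℕ) (a b : Term (F ⊕ ℕ) V), NFold (LevelStep R' m) n a b →
      RedStar R (proj s a) (proj s b) := by
    intro n
    induction n with
    | zero => intro a b h; cases h; exact .refl
    | succ n ih =>
      rintro a b ⟨c, h1, h2⟩
      exact (level_sim hD hT s m a c h1).trans (ih _ _ h2)
  have := hs n _ _ h
  rwa [proj_mapF, proj_mapF] at this
end
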